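/- arXiv:2010.13165 — 2 statements merged into one kernel-verified Lean document; each statement's English description precedes it below -/
import Mathlib

section
/- Let p be a positive integer and let x, y ∈ ℝᵖ be unit vectors. Let γ be the standard Gaussian measure on ℝᵖ (the p-fold product of the standard normal distribution N(0,1)). Then γ({w ∈ ℝᵖ : ⟨w, x⟩ ≥ 0 and ⟨w, y⟩ ≥ 0}) = 1/2 − arccos(⟨x, y⟩)/(2π); consequently ∫ ⟨x,y⟩·𝟙{⟨w,x⟩ ≥ 0}·𝟙{⟨w,y⟩ ≥ 0} dγ(w) = (1/2 − arccos(⟨x, y⟩)/(2π))·⟨x, y⟩. -/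
open Real MeasureTheory ProbabilityTheory

lemma cf_pi (p : ℕ) (t : Fin p → ℝ) :
    ∫ w : Fin p → ℝ, Complex.exp ((∑ i, w i * t i : ℝ) * Complex.I)
      ∂(MeasureTheory.Measure.pi fun _ : Fin p => gaussianReal 0 1)
     = Complex.exp (-((∑ i, (t i)^2 : ℝ) : ℂ) / 2) := by
  simp_rw [Complex.ofReal_sum, Finset.sum_mul, Complex.exp_sum,
    integral_fintype_prod_eq_prod (f := fun i (x : ℝ) ↦ Complex.exp (((x * t i : ℝ) : ℂ) * Complex.I)),
    mul_comm _ (t _), Complex.ofReal_mul, ← charFun_apply_real, charFun_gaussianReal]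
  rw [← Complex.exp_sum]
  congr 1
  simp [Finset.sum_div, neg_div]

lemma cf_prod (a b : ℝ) :
    ∫ w : ℝ × ℝ, Complex.exp ((w.1 * a + w.2 * b : ℝ) * Complex.I)
      ∂((gaussianReal 0 1).prod (gaussianReal 0 1))
     = Complex.exp (-((a^2+b^2 : ℝ) : ℂ) / 2) := by
  have := integral_prod_mul (μ := gaussianReal 0 1) (ν := gaussianReal 0 1)
    (fun x : ℝ => Complex.exp (((a * x : ℝ) : ℂ) * Complex.I))
    (fun x : ℝ => Complex.exp (((b * x : ℝ) : ℂ) * Complex.I))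
  simp_rw [Complex.ofReal_mul, ← charFun_apply_real, charFun_gaussianReal, ← Complex.exp_add] at this
  have k : ∀ w : ℝ × ℝ, ((w.1 * a + w.2 * b : ℝ) : ℂ) * Complex.I
      = a * w.1 * Complex.I + b * w.2 * Complex.I := by
    intro w; push_cast; ring
  simp_rw [k]
  rw [this]
  congr 1
  push_cast; ring

lemma law (p : ℕ) (x y : Fin p → ℝ) (s : ℝ)
    (hx : ∑ i, (x i) ^ 2 = 1) (hy : ∑ i, (y i) ^ 2 = 1) (hs : (∑ i, x i * y i)^2 + s^2 = 1) :
    (MeasureTheory.Measure.pi fun _ : Fin p => gaussianReal 0 1).map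
      (fun w => (∑ i, w i * x i, ∑ i, w i * y i)) =
    ((gaussianReal 0 1).prod (gaussianReal 0 1)).map
      (fun u => (u.1, (∑ i, x i * y i) * u.1 + s * u.2)) := by
  have m1 : Measurable (fun w : Fin p → ℝ => (∑ i, w i * x i, ∑ i, w i * y i)) := by fun_prop
  have m2 : Measurable (fun u : ℝ × ℝ => (u.1, (∑ i, x i * y i) * u.1 + s * u.2)) := by fun_prop
  have := Measure.isProbabilityMeasure_map (μ := (MeasureTheory.Measure.pi fun _ : Fin p => gaussianReal 0 1)) m1.aemeasurable
  have := Measure.isProbabilityMeasure_map (μ := ((gaussianReal 0 1).prod (gaussianReal 0 1))) m2.aemeasurable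
  apply Measure.ext_of_charFunDual
  ext L
  obtain ⟨a, b, hL⟩ : ∃ a b : ℝ, ∀ u v : ℝ, L (u, v) = u * a + v * b := by
    refine ⟨L (1, 0), L (0, 1), ?_⟩
    intro a b
    have : ((a, b) : ℝ × ℝ) = a • (1, 0) + b • (0, 1) := by simp
    rw [this, map_add, map_smul, map_smul, smul_eq_mul, smul_eq_mul]
  rw [charFunDual_apply, charFunDual_apply, integral_map m1.aemeasurable (by fun_prop),
    integral_map m2.aemeasurable (by fun_prop)]
  simp_rw [hL]
  clear hL
  have e1 := cf_pi p (fun i => a * x i + b * y i)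
  have e2 := cf_prod (a + b * ∑ i, x i * y i) (b * s)
  have k1 : ∀ w : Fin p → ℝ, (∑ i, w i * x i) * a + (∑ i, w i * y i) * b = ∑ i, w i * (a * x i + b * y i) := by
    intro w
    rw [Finset.sum_mul, Finset.sum_mul, ← Finset.sum_add_distrib]
    congr! 1; ring
  have k2 : ∀ u : ℝ × ℝ, u.1 * a + ((∑ i, x i * y i) * u.1 + s * u.2) * b = u.1 * (a + b * ∑ i, x i * y i) + u.2 * (b * s) := by
    intro u; ring
  simp_rw [k1, k2]
  rw [e1, e2]
  congr 4
  have : ∑ i, (a * x i + b * y i)^2 = a^2 * ∑ i, (x i)^2 + 2 * a * b * (∑ i, x i * y i) + b^2 * ∑ i, (y i)^2 := by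
    simp_rw [Finset.mul_sum, ← Finset.sum_add_distrib]
    congr! 1; ring
  rw [this, hx, hy]
  linear_combination (-b^2) * hs

lemma angle (θ : ℝ) (h0 : 0 ≤ θ) (h1 : θ ≤ π) :
    volume ({φ : ℝ | 0 ≤ cos φ ∧ 0 ≤ cos (φ - θ)} ∩ Set.Ioo (-π) π) = ENNReal.ofReal (π - θ) := by
  apply le_antisymm
  · have : ({φ : ℝ | 0 ≤ cos φ ∧ 0 ≤ cos (φ - θ)} ∩ Set.Ioo (-π) π) ⊆ Set.Icc (θ - π/2) (π/2) ∪ {-(π/2)} := by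
      rintro φ ⟨⟨hc, hd⟩, h2, h3⟩
      have a1 : φ ≤ π/2 := by
        by_contra! h
        have := cos_neg_of_pi_div_two_lt_of_lt h (by linarith)
        linarith
      have a2 : -(π/2) ≤ φ := by
        by_contra! h
        have := cos_neg_of_pi_div_two_lt_of_lt (x := -φ) (by linarith) (by linarith)
        rw [cos_neg] at this
        linarith
      by_cases h : φ = -(π/2)
      · right; exact h
      left
      refine ⟨?_, a1⟩
      by_contra! h'
      have a3 : -(π/2) < φ := lt_of_le_of_ne a2 (Ne.symm h)
      have := cos_neg_of_pi_div_two_lt_of_lt (x := -(φ - θ)) (by linarith) (by linarith)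
      rw [cos_neg] at this
      linarith
    refine (measure_mono this).trans ((measure_union_le _ _).trans ?_)
    simp only [Real.volume_Icc, Real.volume_singleton, add_zero]
    apply ENNReal.ofReal_le_ofReal; linarith
  · have : Set.Ioo (θ - π/2) (π/2) ⊆ ({φ : ℝ | 0 ≤ cos φ ∧ 0 ≤ cos (φ - θ)} ∩ Set.Ioo (-π) π) := by
      rintro φ ⟨h2, h3⟩
      have := pi_pos
      exact ⟨⟨cos_nonneg_of_mem_Icc ⟨by linarith, by linarith⟩, cos_nonneg_of_mem_Icc ⟨by linarith, by linarith⟩⟩, by linarith, by linarith⟩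
    refine le_trans ?_ (measure_mono this)
    rw [Real.volume_Ioo]
    apply ENNReal.ofReal_le_ofReal; linarith

lemma gauss_polar : ∃ K : ENNReal, ∀ A : Set (ℝ × ℝ), MeasurableSet A →
    (∀ r : ℝ, 0 < r → ∀ u, r • u ∈ A ↔ u ∈ A) →
    ((gaussianReal 0 1).prod (gaussianReal 0 1)) A =
      K * volume ({φ : ℝ | (cos φ, sin φ) ∈ A} ∩ Set.Ioo (-π) π) := by
  refine ⟨∫⁻ r in Set.Ioi (0:ℝ), ENNReal.ofReal r * ENNReal.ofReal ((√(2 * π))⁻¹ * (√(2 * π))⁻¹ * rexp (- r^2/2)), ?_⟩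
  intro A hA hc
  have hm : MeasurableSet {φ : ℝ | (cos φ, sin φ) ∈ A} := by
    apply measurableSet_preimage (f := fun φ : ℝ => (cos φ, sin φ)) (by fun_prop) hA
  rw [gaussianReal_of_var_ne_zero _ one_ne_zero,
    prod_withDensity (by fun_prop) (by fun_prop), withDensity_apply _ hA, ← lintegral_indicator hA,
    ← Measure.volume_eq_prod, ← lintegral_comp_polarCoord_symm, polarCoord_target, Measure.volume_eq_prod,
    ← Measure.prod_restrict, ← Measure.restrict_apply hm, ← lintegral_indicator_one hm,
    ← lintegral_prod_mul (by fun_prop) (by measurability)]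
  have hpos : ∀ᵐ z ∂((volume.restrict (Set.Ioi (0:ℝ))).prod (volume.restrict (Set.Ioo (-π) π))), 0 < z.1 := by
    rw [Measure.prod_restrict]
    filter_upwards [ae_restrict_mem (by measurability)] with z hz using hz.1
  apply lintegral_congr_ae
  filter_upwards [hpos] with z hz
  have h2 := hc z.1 hz (cos z.2, sin z.2)
  simp only [Prod.smul_mk, smul_eq_mul] at h2
  have h3 : polarCoord.symm z ∈ A ↔ z.2 ∈ {φ : ℝ | (cos φ, sin φ) ∈ A} := by
    rw [polarCoord_symm_apply]; exact h2
  by_cases h : z.2 ∈ {φ : ℝ | (cos φ, sin φ) ∈ A}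
  · rw [Set.indicator_of_mem (h3.2 h), Set.indicator_of_mem h, polarCoord_symm_apply]
    simp only [smul_eq_mul, Pi.one_apply, mul_one, gaussianPDF]
    rw [← ENNReal.ofReal_mul (by apply gaussianPDFReal_nonneg)]
    congr 2
    simp only [gaussianPDFReal, NNReal.coe_one, sub_zero, mul_one]
    have : rexp (-z.1^2/2) = rexp (-(z.1 * cos z.2)^2/2) * rexp (-(z.1 * sin z.2)^2/2) := by
      rw [← Real.exp_add]; congr 1
      linear_combination (z.1^2/2) * (sin_sq_add_cos_sq z.2)
    rw [this]; ring
  · rw [Set.indicator_of_notMem (fun h' => h (h3.1 h')), Set.indicator_of_notMem h]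
    simp

lemma two_dim (θ : ℝ) (h0 : 0 ≤ θ) (h1 : θ ≤ π) :
    ((gaussianReal 0 1).prod (gaussianReal 0 1)) {u : ℝ × ℝ | 0 ≤ u.1 ∧ 0 ≤ cos θ * u.1 + sin θ * u.2}
      = ENNReal.ofReal (1 / 2 - θ / (2 * π)) := by
  obtain ⟨K, hK⟩ := gauss_polar
  have hu := hK Set.univ MeasurableSet.univ (by simp)
  have hA := hK {u : ℝ × ℝ | 0 ≤ u.1 ∧ 0 ≤ cos θ * u.1 + sin θ * u.2} (by measurability) (by
    intro r hr u
    simp only [Set.mem_ofPred_eq, Prod.smul_fst, Prod.smul_snd, smul_eq_mul]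
    rw [show cos θ * (r * u.1) + sin θ * (r * u.2) = r * (cos θ * u.1 + sin θ * u.2) by ring,
      mul_nonneg_iff_of_pos_left hr, mul_nonneg_iff_of_pos_left hr])
  have hpi := pi_pos
  simp only [measure_univ, Set.mem_univ, Set.ofPred_true, Set.univ_inter, Real.volume_Ioo] at hu
  have e : {φ : ℝ | (cos φ, sin φ) ∈ {u : ℝ × ℝ | 0 ≤ u.1 ∧ 0 ≤ cos θ * u.1 + sin θ * u.2}} = {φ : ℝ | 0 ≤ cos φ ∧ 0 ≤ cos (φ - θ)} := by
    ext φ; simp [cos_sub, mul_comm]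
  rw [hA, e, angle θ h0 h1]
  have hK' : K = ENNReal.ofReal (1 / (2*π)) := by
    rw [show π - -π = 2 * π by ring] at hu
    rw [one_div, ENNReal.ofReal_inv_of_pos (by positivity)]
    exact ENNReal.eq_inv_of_mul_eq_one_left hu.symm
  rw [hK', ← ENNReal.ofReal_mul (by positivity)]
  congr 1
  field_simp

theorem gaussian_orthant_arccos
    (p : ℕ) (hp : 0 < p) (x y : Fin p → ℝ)
    (hx : ∑ i, (x i) ^ 2 = 1) (hy : ∑ i, (y i) ^ 2 = 1) :
    (MeasureTheory.Measure.pi fun _ : Fin p => gaussianReal 0 1)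
        {w : Fin p → ℝ | 0 ≤ ∑ i, w i * x i ∧ 0 ≤ ∑ i, w i * y i}
      = ENNReal.ofReal (1 / 2 - Real.arccos (∑ i, x i * y i) / (2 * Real.pi)) ∧
    ∫ w : Fin p → ℝ,
        (∑ i, x i * y i) *
          Set.indicator {w : Fin p → ℝ | 0 ≤ ∑ i, w i * x i} (fun _ => (1 : ℝ)) w *
          Set.indicator {w : Fin p → ℝ | 0 ≤ ∑ i, w i * y i} (fun _ => (1 : ℝ)) w
        ∂(MeasureTheory.Measure.pi fun _ : Fin p => gaussianReal 0 1)
      = (1 / 2 - Real.arccos (∑ i, x i * y i) / (2 * Real.pi)) * (∑ i, x i * y i) := by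
  have hcs : (∑ i, x i * y i)^2 ≤ 1 := by
    have := Finset.sum_mul_sq_le_sq_mul_sq Finset.univ x y
    rwa [hx, hy, one_mul] at this
  have hc := abs_le.1 ((sq_le_one_iff_abs_le_one _).1 hcs)
  have hcos : cos (arccos (∑ i, x i * y i)) = ∑ i, x i * y i := cos_arccos hc.1 hc.2
  have hlaw := law p x y (sin (arccos (∑ i, x i * y i))) hx hy (by
    nth_rw 1 [← hcos]; exact cos_sq_add_sin_sq _)
  have h2 := two_dim (arccos (∑ i, x i * y i)) (arccos_nonneg _) (arccos_le_pi _)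
  rw [hcos] at h2
  have hQ : MeasurableSet {v : ℝ × ℝ | 0 ≤ v.1 ∧ 0 ≤ v.2} := by measurability
  have hm := congrArg (fun μ => μ {v : ℝ × ℝ | 0 ≤ v.1 ∧ 0 ≤ v.2}) hlaw
  rw [Measure.map_apply (by fun_prop) hQ, Measure.map_apply (by fun_prop) hQ] at hm
  have first : (MeasureTheory.Measure.pi fun _ : Fin p => gaussianReal 0 1)
        {w : Fin p → ℝ | 0 ≤ ∑ i, w i * x i ∧ 0 ≤ ∑ i, w i * y i}
      = ENNReal.ofReal (1 / 2 - Real.arccos (∑ i, x i * y i) / (2 * Real.pi)) := hm.trans h2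
  refine ⟨first, ?_⟩
  have hS : MeasurableSet {w : Fin p → ℝ | 0 ≤ ∑ i, w i * x i ∧ 0 ≤ ∑ i, w i * y i} :=
    measurableSet_preimage (f := fun w : Fin p → ℝ => (∑ i, w i * x i, ∑ i, w i * y i)) (by fun_prop) hQ
  have hnn : 0 ≤ 1 / 2 - Real.arccos (∑ i, x i * y i) / (2 * Real.pi) := by
    have := arccos_le_pi (∑ i, x i * y i)
    have := pi_pos
    rw [sub_nonneg, div_le_div_iff₀ (by positivity) (by positivity)]
    linarith
  have hfun : ∀ w : Fin p → ℝ, (∑ i, x i * y i) *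
          Set.indicator {w : Fin p → ℝ | 0 ≤ ∑ i, w i * x i} (fun _ => (1 : ℝ)) w *
          Set.indicator {w : Fin p → ℝ | 0 ≤ ∑ i, w i * y i} (fun _ => (1 : ℝ)) w =
      Set.indicator {w : Fin p → ℝ | 0 ≤ ∑ i, w i * x i ∧ 0 ≤ ∑ i, w i * y i}
        (fun _ => ∑ i, x i * y i) w := by
    intro w
    by_cases h1 : 0 ≤ ∑ i, w i * x i <;> by_cases h2 : 0 ≤ ∑ i, w i * y i <;>
      simp [Set.indicator, h1, h2]
  simp_rw [hfun]
  rw [integral_indicator_const _ hS, measureReal_def, first, ENNReal.toReal_ofReal hnn, smul_eq_mul]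
end

section
/- Let p and n be positive integers and let x₁, …, x_n ∈ ℝᵖ be unit vectors such that for all i ≠ j, x_i is not parallel to x_j (i.e., x_i ≠ x_j and x_i ≠ −x_j). Then the real n×n matrix H^∞ with entries H^∞_{ij} = (1/2 − arccos(⟨x_i, x_j⟩)/(2π))·⟨x_i, x_j⟩ is positive definite; in particular its smallest eigenvalue λ₀ is strictly positive. -/
open Matrix Real

noncomputable def ntkB (n : ℕ) : ℝ := Ring.choose ((1/2 : ℝ) + n - 1) n

lemma ntkB_pos (n : ℕ) : 0 < ntkB n := by
  have h1 : ntkB n = Ring.multichoose (1/2 : ℝ) n := by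
    unfold ntkB Ring.choose
    congr 1
    ring
  have h2 := Ring.factorial_nsmul_multichoose_eq_ascPochhammer (1/2 : ℝ) n
  have h3 : 0 < (ascPochhammer ℝ n).eval (1/2 : ℝ) := ascPochhammer_pos n _ (by norm_num)
  rw [h1]
  rw [Polynomial.ascPochhammer_smeval_eq_eval] at h2
  rw [← h2, nsmul_eq_mul] at h3
  exact pos_of_mul_pos_right h3 (by positivity)

lemma ntk_hasSum_sqrt (u : ℝ) (hu : |u| < 1) :
    HasSum (fun n => ntkB n * u ^ n) (1 / √(1 - u)) := by
  have h := (Real.one_div_one_sub_rpow_hasFPowerSeriesOnBall_zero (1/2)).hasSum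
    (y := u) (by simpa [enorm_eq_nnnorm, ← NNReal.coe_lt_coe] using hu)
  simpa [FormalMultilinearSeries.ofScalars_apply_eq, ntkB, Real.sqrt_eq_rpow, mul_comm] using h

lemma ntk_hasSum_arcsin (t : ℝ) (ht : |t| < 1) :
    HasSum (fun n : ℕ => ntkB n / (2 * n + 1) * t ^ (2 * n + 1)) (arcsin t) := by
  obtain ⟨r, htr, hr1⟩ := exists_between ht
  have hr0 : 0 < r := lt_of_le_of_lt (abs_nonneg t) htr
  have hrr : |r ^ 2| < 1 := by rw [abs_of_nonneg (by positivity)]; nlinarith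
  have hu := (ntk_hasSum_sqrt (r ^ 2) hrr).summable
  have hg : ∀ (n : ℕ) (y : ℝ), y ∈ Set.Ioo (-r) r →
      HasDerivAt (fun y : ℝ => ntkB n / (2 * n + 1) * y ^ (2 * n + 1))
        (ntkB n * (y ^ 2) ^ n) y := by
    intro n y _
    have := (hasDerivAt_pow (2 * n + 1) y).const_mul (ntkB n / (2 * n + 1))
    have hne : (2 * (n : ℝ) + 1) ≠ 0 := by positivity
    have e : ntkB n / (2 * n + 1) * (((2 * n + 1 : ℕ) : ℝ) * y ^ (2 * n + 1 - 1)) =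
        ntkB n * (y ^ 2) ^ n := by
      rw [Nat.add_sub_cancel, pow_mul]
      push_cast
      field_simp
    rwa [e] at this
  have hg' : ∀ (n : ℕ) (y : ℝ), y ∈ Set.Ioo (-r) r →
      ‖ntkB n * (y ^ 2) ^ n‖ ≤ ntkB n * (r ^ 2) ^ n := by
    intro n y hy
    rw [Real.norm_eq_abs, abs_of_nonneg (mul_nonneg (ntkB_pos n).le (by positivity))]
    have := (ntkB_pos n).le
    have h2 : y ^ 2 ≤ r ^ 2 := by nlinarith [hy.1, hy.2]
    gcongr
  have h0 : (0 : ℝ) ∈ Set.Ioo (-r) r := ⟨by linarith, hr0⟩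
  have hs0 : Summable fun n : ℕ => ntkB n / (2 * n + 1) * (0 : ℝ) ^ (2 * n + 1) := by
    simp
  have htm : t ∈ Set.Ioo (-r) r := abs_lt.mp htr
  have hsum := summable_of_summable_hasDerivAt_of_isPreconnected hu isOpen_Ioo isPreconnected_Ioo
    hg hg' h0 hs0 htm
  have hder : ∀ y ∈ Set.Ioo (-r) r,
      HasDerivAt (fun z : ℝ => ∑' n : ℕ, ntkB n / (2 * n + 1) * z ^ (2 * n + 1))
        (1 / √(1 - y ^ 2)) y := by
    intro y hy
    have h := hasDerivAt_tsum_of_isPreconnected hu isOpen_Ioo isPreconnected_Ioo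
      hg hg' h0 hs0 hy
    have hy2 : |y ^ 2| < 1 := by
      rw [abs_of_nonneg (by positivity)]; nlinarith [hy.1, hy.2]
    rwa [(ntk_hasSum_sqrt (y ^ 2) hy2).tsum_eq] at h
  have hder2 : ∀ y ∈ Set.Ioo (-r) r, HasDerivAt arcsin (1 / √(1 - y ^ 2)) y := by
    intro y hy
    exact hasDerivAt_arcsin (by linarith [hy.1] : -1 < y).ne' (by linarith [hy.2] : y < 1).ne
  have heq := isOpen_Ioo.eqOn_of_deriv_eq (isPreconnected_Ioo (a := -r) (b := r))
    (fun y hy => (hder y hy).differentiableAt.differentiableWithinAt)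
    (fun y hy => (hder2 y hy).differentiableAt.differentiableWithinAt)
    (fun y hy => by rw [(hder y hy).deriv, (hder2 y hy).deriv]) h0 (by simp) htm
  rw [← heq]
  exact hsum.hasSum

lemma ntk_pow_nonneg {n q : ℕ} (x : Fin n → (Fin q → ℝ)) (v : Fin n → ℝ) (k : ℕ) :
    0 ≤ ∑ i, ∑ j, v i * v j * (∑ l, x i l * x j l) ^ (k + 1) := by
  have hP : ∀ k : ℕ, (Matrix.of fun i j : Fin n => (∑ l, x i l * x j l) ^ (k + 1)).PosSemidef := by
    have h1 : (Matrix.of fun i j : Fin n => (∑ l, x i l * x j l)).PosSemidef := by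
      have := Matrix.posSemidef_self_mul_conjTranspose (Matrix.of x)
      convert this using 1
      ext i j
      simp [Matrix.mul_apply]
    intro k
    induction k with
    | zero => simpa using h1
    | succ k ih =>
      have e : (Matrix.of fun i j : Fin n => (∑ l, x i l * x j l) ^ (k + 1 + 1)) =
          (Matrix.of fun i j : Fin n => (∑ l, x i l * x j l) ^ (k + 1)) ⊙
          (Matrix.of fun i j : Fin n => (∑ l, x i l * x j l)) := by
        ext i j
        simp only [Matrix.of_apply, Matrix.hadamard_apply, pow_succ]
      rw [e]
      exact ih.hadamard h1
  have := (hP k).dotProduct_mulVec_nonneg v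
  simp only [dotProduct, mulVec, Matrix.of_apply, Pi.star_apply, star_trivial,
    Finset.mul_sum] at this
  refine this.trans_eq (Finset.sum_congr rfl fun i _ => Finset.sum_congr rfl fun j _ => ?_)
  ring

lemma ntk_lower {n q : ℕ} (x : Fin n → (Fin q → ℝ)) (v : Fin n → ℝ) (k : ℕ)
    (hle : ∀ i j, |∑ l, x i l * x j l| ≤ 1) :
    ntkB k / (2 * k + 1) * ∑ i, ∑ j, v i * v j * (∑ l, x i l * x j l) ^ (2 * k + 2) ≤
      ∑ i, ∑ j, v i * v j * ((∑ l, x i l * x j l) * arcsin (∑ l, x i l * x j l)) := by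
  set t : Fin n → Fin n → ℝ := fun i j => ∑ l, x i l * x j l with htdef
  have key : ∀ r : ℝ, r ∈ Set.Ioo (0 : ℝ) 1 →
      ntkB k / (2 * k + 1) * r ^ (2 * k + 2) * ∑ i, ∑ j, v i * v j * (t i j) ^ (2 * k + 2) ≤
      ∑ i, ∑ j, v i * v j * ((r * t i j) * arcsin (r * t i j)) := by
    intro r hr
    have hs : HasSum (fun m : ℕ => ∑ i, ∑ j, v i * v j *
        ((r * t i j) * (ntkB m / (2 * m + 1) * (r * t i j) ^ (2 * m + 1))))
        (∑ i, ∑ j, v i * v j * ((r * t i j) * arcsin (r * t i j))) := by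
      refine hasSum_sum fun i _ => hasSum_sum fun j _ => ?_
      refine ((ntk_hasSum_arcsin (r * t i j) ?_).mul_left _).mul_left _
      rw [abs_mul, abs_of_pos hr.1]
      have := hle i j
      have h2 := hr.2
      have h1 := hr.1
      calc r * |t i j| ≤ r * 1 := by gcongr
        _ < 1 := by linarith
    have hterm : ∀ m : ℕ, (∑ i, ∑ j, v i * v j *
        ((r * t i j) * (ntkB m / (2 * m + 1) * (r * t i j) ^ (2 * m + 1)))) =
        ntkB m / (2 * m + 1) * r ^ (2 * m + 2) * ∑ i, ∑ j, v i * v j * (t i j) ^ (2 * m + 2) := by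
      intro m
      simp only [Finset.mul_sum]
      refine Finset.sum_congr rfl fun i _ => Finset.sum_congr rfl fun j _ => ?_
      ring
    rw [← hterm]
    refine le_hasSum hs k fun m _ => ?_
    rw [hterm]
    have := (ntkB_pos m).le
    have := hr.1
    exact mul_nonneg (by positivity) (ntk_pow_nonneg x v (2 * m + 1))
  have hc1 : Continuous fun r : ℝ =>
      ntkB k / (2 * k + 1) * r ^ (2 * k + 2) * ∑ i, ∑ j, v i * v j * (t i j) ^ (2 * k + 2) := by
    fun_prop
  have hc2 : Continuous fun r : ℝ =>
      ∑ i, ∑ j, v i * v j * ((r * t i j) * arcsin (r * t i j)) := by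
    refine continuous_finsetSum _ fun i _ => continuous_finsetSum _ fun j _ => ?_
    have := continuous_arcsin.comp (continuous_mul_const (t i j))
    simp only [Function.comp_def] at this
    fun_prop
  have h := le_of_tendsto_of_tendsto (b := nhdsWithin (1 : ℝ) (Set.Iio 1))
    ((hc1.tendsto 1).mono_left nhdsWithin_le_nhds)
    ((hc2.tendsto 1).mono_left nhdsWithin_le_nhds)
    (by filter_upwards [Ioo_mem_nhdsLT (zero_lt_one' ℝ)] with r hr using key r hr)
  simpa using h

lemma ntk_form_pos {n q : ℕ} (x : Fin n → (Fin q → ℝ))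
    (hunit : ∀ i, ∑ k, (x i k) ^ 2 = 1)
    (hnonpar : ∀ i j, i ≠ j → x i ≠ x j ∧ x i ≠ -x j) (v : Fin n → ℝ) (hv : v ≠ 0) :
    0 < ∑ i, ∑ j, v i * v j * ((1 / 2 - Real.arccos (∑ k, x i k * x j k) / (2 * Real.pi)) *
          (∑ k, x i k * x j k)) := by
  have hdiag : ∀ i, ∑ k, x i k * x i k = 1 := fun i => by simpa [sq] using hunit i
  have hlt : ∀ i j, i ≠ j → |∑ k, x i k * x j k| < 1 := by
    intro i j hij
    obtain ⟨h1, h2⟩ := hnonpar i j hij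
    have e1 : ∑ k, (x i k - x j k) ^ 2 = 2 - 2 * ∑ k, x i k * x j k := by
      have : ∑ k, (x i k - x j k) ^ 2 =
          ∑ k, x i k ^ 2 + ∑ k, x j k ^ 2 - 2 * ∑ k, x i k * x j k := by
        rw [Finset.mul_sum, ← Finset.sum_add_distrib, ← Finset.sum_sub_distrib]
        exact Finset.sum_congr rfl fun k _ => by ring
      rw [this, hunit, hunit]; ring
    have e2 : ∑ k, (x i k + x j k) ^ 2 = 2 + 2 * ∑ k, x i k * x j k := by
      have : ∑ k, (x i k + x j k) ^ 2 =
          ∑ k, x i k ^ 2 + ∑ k, x j k ^ 2 + 2 * ∑ k, x i k * x j k := by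
        rw [Finset.mul_sum, ← Finset.sum_add_distrib, ← Finset.sum_add_distrib]
        exact Finset.sum_congr rfl fun k _ => by ring
      rw [this, hunit, hunit]; ring
    obtain ⟨k1, hk1⟩ := Function.ne_iff.mp h1
    obtain ⟨k2, hk2⟩ := Function.ne_iff.mp h2
    have p1 : 0 < ∑ k, (x i k - x j k) ^ 2 :=
      Finset.sum_pos' (fun k _ => sq_nonneg _)
        ⟨k1, Finset.mem_univ _, by have := sub_ne_zero.mpr hk1; positivity⟩
    have p2 : 0 < ∑ k, (x i k + x j k) ^ 2 :=
      Finset.sum_pos' (fun k _ => sq_nonneg _)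
        ⟨k2, Finset.mem_univ _, by
          have : x i k2 + x j k2 ≠ 0 := fun h => hk2 (by simp; linarith)
          positivity⟩
    rw [abs_lt]
    constructor <;> linarith
  have hle : ∀ i j, |∑ k, x i k * x j k| ≤ 1 := by
    intro i j
    by_cases h : i = j
    · subst h; simp [hdiag]
    · exact (hlt i j h).le
  have hvv : 0 < ∑ i, v i * v i := by
    obtain ⟨i, hi⟩ := Function.ne_iff.mp hv
    exact Finset.sum_pos' (fun k _ => mul_self_nonneg _)
      ⟨i, Finset.mem_univ _, mul_self_pos.mpr hi⟩
  have hlim : Filter.Tendsto (fun k : ℕ =>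
      ∑ i, ∑ j, v i * v j * (∑ l, x i l * x j l) ^ (2 * k + 2)) Filter.atTop
      (nhds (∑ i, ∑ j, v i * v j * (if i = j then 1 else 0))) := by
    refine tendsto_finsetSum _ fun i _ => tendsto_finsetSum _ fun j _ => ?_
    refine Filter.Tendsto.const_mul _ ?_
    by_cases h : i = j
    · subst h; simp [hdiag]
    · simp only [h, if_false]
      refine (tendsto_pow_atTop_nhds_zero_of_abs_lt_one (hlt i j h)).comp ?_
      exact Filter.tendsto_atTop_mono (fun k => by simp; omega) Filter.tendsto_id
  have hlim2 : ∑ i, ∑ j, v i * v j * (if i = j then (1 : ℝ) else 0) = ∑ i, v i * v i := by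
    simp
  rw [hlim2] at hlim
  obtain ⟨k, hk⟩ := (hlim.eventually (lt_mem_nhds hvv)).exists
  have hlow := ntk_lower x v k hle
  have hB := ntkB_pos k
  have h1 := ntk_pow_nonneg x v 0
  have hpos : 0 < ∑ i, ∑ j, v i * v j *
      ((∑ l, x i l * x j l) * arcsin (∑ l, x i l * x j l)) :=
    lt_of_lt_of_le (mul_pos (by positivity) hk) hlow
  have hsplit : ∑ i, ∑ j, v i * v j * ((1 / 2 - Real.arccos (∑ k, x i k * x j k) / (2 * Real.pi)) *
          (∑ k, x i k * x j k)) =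
      1 / 4 * (∑ i, ∑ j, v i * v j * (∑ l, x i l * x j l) ^ (0 + 1)) +
      1 / (2 * Real.pi) * ∑ i, ∑ j, v i * v j *
      ((∑ l, x i l * x j l) * arcsin (∑ l, x i l * x j l)) := by
    rw [Finset.mul_sum, Finset.mul_sum, ← Finset.sum_add_distrib]
    refine Finset.sum_congr rfl fun i _ => ?_
    rw [Finset.mul_sum, Finset.mul_sum, ← Finset.sum_add_distrib]
    refine Finset.sum_congr rfl fun j _ => ?_
    rw [Real.arccos]
    have := Real.pi_ne_zero
    generalize (∑ k, x i k * x j k) = s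
    field_simp
    ring
  rw [hsplit]
  have := Real.pi_pos
  have : 0 < 1 / (2 * Real.pi) * ∑ i, ∑ j, v i * v j *
      ((∑ l, x i l * x j l) * arcsin (∑ l, x i l * x j l)) := mul_pos (by positivity) hpos
  linarith

/-- Positive definiteness of the limiting NTK matrix
`H^∞_{ij} = (1/2 - arccos(⟨x_i, x_j⟩)/(2π)) ⟨x_i, x_j⟩` for pairwise
non-parallel unit inputs; in particular all its eigenvalues are strictly
positive. -/
theorem limiting_ntk_pos_def
    (q n : ℕ) (hq : 0 < q) (hn : 0 < n) (x : Fin n → (Fin q → ℝ))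
    (hunit : ∀ i, ∑ k, (x i k) ^ 2 = 1)
    (hnonpar : ∀ i j, i ≠ j → x i ≠ x j ∧ x i ≠ -x j) :
    (Matrix.of fun i j : Fin n =>
        (1 / 2 - Real.arccos (∑ k, x i k * x j k) / (2 * Real.pi)) *
          (∑ k, x i k * x j k)).PosDef ∧
    ∀ (μ : ℝ) (v : Fin n → ℝ), v ≠ 0 →
      (Matrix.of fun i j : Fin n =>
        (1 / 2 - Real.arccos (∑ k, x i k * x j k) / (2 * Real.pi)) *
          (∑ k, x i k * x j k)).mulVec v = μ • v → 0 < μ := by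
  have hPD : (Matrix.of fun i j : Fin n =>
        (1 / 2 - Real.arccos (∑ k, x i k * x j k) / (2 * Real.pi)) *
          (∑ k, x i k * x j k)).PosDef := by
    refine Matrix.PosDef.of_dotProduct_mulVec_pos ?_ ?_
    · ext i j
      have : ∑ k, x j k * x i k = ∑ k, x i k * x j k :=
        Finset.sum_congr rfl fun k _ => mul_comm _ _
      simp only [Matrix.conjTranspose_apply, Matrix.of_apply, star_trivial, this]
    · intro v hv
      have h := ntk_form_pos x hunit hnonpar v hv
      have e : star v ⬝ᵥ ((Matrix.of fun i j : Fin n =>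
        (1 / 2 - Real.arccos (∑ k, x i k * x j k) / (2 * Real.pi)) *
          (∑ k, x i k * x j k)) *ᵥ v) = ∑ i, ∑ j, v i * v j *
          ((1 / 2 - Real.arccos (∑ k, x i k * x j k) / (2 * Real.pi)) *
          (∑ k, x i k * x j k)) := by
        simp only [dotProduct, mulVec, Matrix.of_apply, Pi.star_apply, star_trivial]
        refine Finset.sum_congr rfl fun i _ => ?_
        rw [Finset.mul_sum]
        refine Finset.sum_congr rfl fun j _ => ?_
        ring
      rw [e]
      exact h
  refine ⟨hPD, fun μ v hv hμ => ?_⟩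
  have h := hPD.dotProduct_mulVec_pos hv
  rw [hμ, dotProduct_smul, smul_eq_mul] at h
  have h2 : 0 ≤ star v ⬝ᵥ v := dotProduct_star_self_nonneg v
  exact pos_of_mul_pos_left h h2
end
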